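/- Let y be an m-dimensional and y' an n-dimensional nonnegative vector, and suppose x ◁ y and x' ◁ y'. Then the concatenation x⊕x' is strictly majorized by y⊕y' if and only if max y > min y' and max y' > min y. -/

import Mathlib

noncomputable section

/-- `eSum x l` : the sum of the `l` largest components of `x`. -/
def eSum {n : ℕ} (x : Fin n → ℝ) (l : ℕ) : ℝ :=
  sSup {r | ∃ s : Finset (Fin n), s.card = l ∧ r = ∑ i ∈ s, x i}

/-- `ESum x l` : the sum of the `l` smallest components of `x`. -/
def ESum {n : ℕ} (x : Fin n → ℝ) (l : ℕ) : ℝ :=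
  sInf {r | ∃ s : Finset (Fin n), s.card = l ∧ r = ∑ i ∈ s, x i}

/-- Majorization `x ≺ y` (for vectors with equal total sum):
`e_l(x) ≤ e_l(y)` for all `1 ≤ l ≤ n`. -/
def Maj {n : ℕ} (x y : Fin n → ℝ) : Prop :=
  (∑ i, x i) = (∑ i, y i) ∧ ∀ l : ℕ, 1 ≤ l → l ≤ n → eSum x l ≤ eSum y l

/-- Strict majorization `x ◁ y`: equal total sums and `e_l(x) < e_l(y)` for all
`1 ≤ l ≤ n - 1`. -/
def SMaj {n : ℕ} (x y : Fin n → ℝ) : Prop :=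
  (∑ i, x i) = (∑ i, y i) ∧ ∀ l : ℕ, 1 ≤ l → l + 1 ≤ n → eSum x l < eSum y l

/-- Super-majorization `x ≺ʷ y` : `E_l(x) ≥ E_l(y)` for all `1 ≤ l ≤ n`. -/
def SupMaj {n : ℕ} (x y : Fin n → ℝ) : Prop :=
  ∀ l : ℕ, 1 ≤ l → l ≤ n → ESum y l ≤ ESum x l

/-- Strict super-majorization `x ◁ʷ y` : `E_l(x) > E_l(y)` for all `1 ≤ l ≤ n`. -/
def SSupMaj {n : ℕ} (x y : Fin n → ℝ) : Prop :=
  ∀ l : ℕ, 1 ≤ l → l ≤ n → ESum y l < ESum x l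

/-- Tensor product of two vectors: the vector of all pairwise products. -/
def tensor {m k : ℕ} (x : Fin m → ℝ) (c : Fin k → ℝ) : Fin (m * k) → ℝ :=
  fun i => x (finProdFinEquiv.symm i).1 * c (finProdFinEquiv.symm i).2

/-- `k`-fold tensor power of a vector. -/
def tpow {n : ℕ} (x : Fin n → ℝ) (k : ℕ) : Fin (n ^ k) → ℝ :=
  fun i => ∏ j : Fin k, x (finFunctionFinEquiv.symm i j)

/-- `V^n` : probability vectors with components in non-increasing order. -/
def Vn (n : ℕ) : Set (Fin n → ℝ) :=
  {x | (∀ i, 0 ≤ x i) ∧ (∑ i, x i) = 1 ∧ Antitone x}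

/-- `S(y)` : members of `V^n` majorized by `y`. -/
def Sset {n : ℕ} (y : Fin n → ℝ) : Set (Fin n → ℝ) :=
  {x ∈ Vn n | Maj x y}

/-- `T(y,c)` : members of `V^n` with `x ⊗ c ≺ y ⊗ c`. -/
def Tcat {n k : ℕ} (y : Fin n → ℝ) (c : Fin k → ℝ) : Set (Fin n → ℝ) :=
  {x ∈ Vn n | Maj (tensor x c) (tensor y c)}

/-- Local uniformity `l_u(c)` : the minimum of the consecutive ratios `c_{i+1}/c_i`. -/
def lu {k : ℕ} (c : Fin k → ℝ) : ℝ :=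
  sInf {r | ∃ i : ℕ, ∃ h : i + 1 < k, r = c ⟨i + 1, h⟩ / c ⟨i, Nat.lt_of_succ_lt h⟩}

/-- Global uniformity `g_u(c) = c_k / c_1` (smallest over largest component of a
non-increasingly ordered vector). -/
def gu {k : ℕ} (c : Fin k → ℝ) : ℝ :=
  if h : 0 < k then c ⟨k - 1, Nat.sub_lt h Nat.one_pos⟩ / c ⟨0, h⟩ else 1

/-- Largest component. -/
def maxc {n : ℕ} (x : Fin n → ℝ) : ℝ := sSup (Set.range x)

/-- Smallest component. -/
def minc {n : ℕ} (x : Fin n → ℝ) : ℝ := sInf (Set.range x)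

/-- `c'` is a (contiguous) segment of `c`. -/
def IsSegment {j k : ℕ} (c' : Fin j → ℝ) (c : Fin k → ℝ) : Prop :=
  ∃ (i : ℕ) (_h : i + j ≤ k), ∀ t : Fin j, c' t = c ⟨i + t, by have := t.isLt; omega⟩

/-- The first `d` components of a vector. -/
def take {n : ℕ} (x : Fin n → ℝ) (d : ℕ) (h : d ≤ n) : Fin d → ℝ :=
  fun i => x ⟨i, Nat.lt_of_lt_of_le i.isLt h⟩

/-- The components of a vector after the first `d` ones. -/
def drop {n : ℕ} (x : Fin n → ℝ) (d : ℕ) : Fin (n - d) → ℝ :=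
  fun i => x ⟨d + i, by have := i.isLt; omega⟩

/-- The segment `(c_i, …, c_j)` of `c` (`0`-based indices). -/
def seg {k : ℕ} (c : Fin k → ℝ) (i j : ℕ) (hij : i ≤ j) (hj : j < k) :
    Fin (j - i + 1) → ℝ :=
  fun t => c ⟨i + t, by have := t.isLt; omega⟩

/-- `(c_i, …, c_j)` is a block of the decomposition `[c]_α` of the (positive,
non-increasingly ordered) vector `c` according to `α`: ratios within the block
exceed `α`, and the ratios at the two boundaries of the block are `≤ α`
(or the block touches an end of `c`). -/
def IsBlock {k : ℕ} (α : ℝ) (c : Fin k → ℝ) (i j : ℕ) : Prop :=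
  ∃ (hij : i ≤ j) (hj : j < k),
    (i = 0 ∨ c ⟨i, by omega⟩ / c ⟨i - 1, by omega⟩ ≤ α) ∧
    (j = k - 1 ∨ ∃ hj1 : j + 1 < k, c ⟨j + 1, hj1⟩ / c ⟨j, hj⟩ ≤ α) ∧
    (∀ (t : ℕ) (ht1 : i ≤ t) (ht2 : t < j), α < c ⟨t + 1, by omega⟩ / c ⟨t, by omega⟩)

/-- `T_k(y)` : states transformable to `y` with a `k`-dimensional catalyst. -/
def Tk {n : ℕ} (k : ℕ) (y : Fin n → ℝ) : Set (Fin n → ℝ) :=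
  {x ∈ Vn n | ∃ c : Fin k → ℝ, (∀ i, 0 < c i) ∧ (∑ i, c i) = 1 ∧ Antitone c ∧
    Maj (tensor x c) (tensor y c)}

/-- `M_k(y)` : states `x` with `x^{⊗k} ≺ y^{⊗k}`. -/
def Mk {n : ℕ} (k : ℕ) (y : Fin n → ℝ) : Set (Fin n → ℝ) :=
  {x ∈ Vn n | Maj (tpow x k) (tpow y k)}

/-- `T(y)` : states transformable to `y` with some catalyst. -/
def Tinf {n : ℕ} (y : Fin n → ℝ) : Set (Fin n → ℝ) :=
  {x ∈ Vn n | ∃ (k : ℕ) (c : Fin k → ℝ), 0 < k ∧ (∀ i, 0 < c i) ∧ (∑ i, c i) = 1 ∧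
    Antitone c ∧ Maj (tensor x c) (tensor y c)}

/-- `M(y)` : states `x` with `x^{⊗k} ≺ y^{⊗k}` for some `k ≥ 1`. -/
def Minf {n : ℕ} (y : Fin n → ℝ) : Set (Fin n → ℝ) :=
  {x ∈ Vn n | ∃ k : ℕ, 1 ≤ k ∧ Maj (tpow x k) (tpow y k)}

/-- `S^λ(y)` : states `x` with `x ≺ʷ λ y`. -/
def Slam {n : ℕ} (lam : ℝ) (y : Fin n → ℝ) : Set (Fin n → ℝ) :=
  {x ∈ Vn n | SupMaj x (fun i => lam * y i)}

/-- `T^λ(y,c)` : states `x` with `x ⊗ c ≺ʷ λ (y ⊗ c)`. -/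
def Tlamc {n k : ℕ} (lam : ℝ) (y : Fin n → ℝ) (c : Fin k → ℝ) : Set (Fin n → ℝ) :=
  {x ∈ Vn n | SupMaj (tensor x c) (fun i => lam * tensor y c i)}

/-- `T_k^λ(y)`. -/
def Tklam {n : ℕ} (k : ℕ) (lam : ℝ) (y : Fin n → ℝ) : Set (Fin n → ℝ) :=
  {x ∈ Vn n | ∃ c : Fin k → ℝ, (∀ i, 0 < c i) ∧ (∑ i, c i) = 1 ∧ Antitone c ∧
    SupMaj (tensor x c) (fun i => lam * tensor y c i)}

/-- `M_k^λ(y)`. -/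
def Mklam {n : ℕ} (k : ℕ) (lam : ℝ) (y : Fin n → ℝ) : Set (Fin n → ℝ) :=
  {x ∈ Vn n | SupMaj (tpow x k) (fun i => lam ^ k * tpow y k i)}

/-- `T^λ(y)`. -/
def Tlaminf {n : ℕ} (lam : ℝ) (y : Fin n → ℝ) : Set (Fin n → ℝ) :=
  {x ∈ Vn n | ∃ (k : ℕ) (c : Fin k → ℝ), 0 < k ∧ (∀ i, 0 < c i) ∧ (∑ i, c i) = 1 ∧
    Antitone c ∧ SupMaj (tensor x c) (fun i => lam * tensor y c i)}

/-- `M^λ(y)`. -/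
def Mlaminf {n : ℕ} (lam : ℝ) (y : Fin n → ℝ) : Set (Fin n → ℝ) :=
  {x ∈ Vn n | ∃ k : ℕ, 1 ≤ k ∧ SupMaj (tpow x k) (fun i => lam ^ k * tpow y k i)}

/-- `K_d(y)` : concatenations `x = x' ⊕ x''` with `x' ◁ y'` and `x'' ◁ y''`,
where `y'` is the first-`d` part of `y` and `y''` the rest. -/
def Kd {n : ℕ} (y : Fin n → ℝ) (d : ℕ) (h : d ≤ n) : Set (Fin n → ℝ) :=
  {x ∈ Vn n | SMaj (take x d h) (take y d h) ∧ SMaj (drop x d) (drop y d)}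

/-- `y(d)` : first `d` components equal to `e_d(y)/d`, the last `n-d` equal to
`(1 - e_d(y))/(n-d)`. -/
def yvec {n : ℕ} (y : Fin n → ℝ) (d : ℕ) : Fin n → ℝ :=
  fun i => if (i : ℕ) < d then eSum y d / d else (1 - eSum y d) / (n - d)

/-- `K_d^λ(y)` : states `x ∈ S^λ(y)` with `E_l(x) = λ E_l(y)` iff `l = n - d`. -/
def Kdlam {n : ℕ} (lam : ℝ) (y : Fin n → ℝ) (d : ℕ) : Set (Fin n → ℝ) :=
  {x ∈ Vn n | SupMaj x (fun i => lam * y i) ∧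
    ∀ l : ℕ, 1 ≤ l → l ≤ n → (ESum x l = lam * ESum y l ↔ l = n - d)}

/-!
The top `t` components of a concatenation are the top `k` of one vector together with the top `l`
of the other for some `k + l = t`. If `x ◁ y` and `x' ◁ y'`, then
`e_k(x) + e_l(x') ≤ e_k(y) + e_l(y')`, and the inequality is strict unless `(k, l)` is one of the
corners `(0, 0)`, `(m, 0)`, `(0, p)` and `(m, p)`. Hence `x ⊕ x' ◁ y ⊕ y'` holds exactly when
neither the whole of `y` nor the whole of `y'` forms the largest components of `y ⊕ y'`. For `y`
this means `min y < max y'`: exchanging these two components increases the sum.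
-/

section Extremes

variable {n : ℕ} (x : Fin n → ℝ)

theorem le_maxc (i : Fin n) : x i ≤ maxc x :=
  le_ciSup (Finite.bddAbove_range x) i

theorem minc_le (i : Fin n) : minc x ≤ x i :=
  ciInf_le (Finite.bddBelow_range x) i

theorem exists_eq_maxc (hn : 0 < n) : ∃ i, x i = maxc x :=
  have := Fin.pos_iff_nonempty.1 hn
  exists_eq_ciSup_of_finite

theorem exists_eq_minc (hn : 0 < n) : ∃ i, x i = minc x :=
  have := Fin.pos_iff_nonempty.1 hn
  exists_eq_ciInf_of_finite

end Extremes

section LargestSums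

variable {n : ℕ} (x : Fin n → ℝ)

theorem finite_sums_of_card (l : ℕ) :
    {r | ∃ s : Finset (Fin n), s.card = l ∧ r = ∑ i ∈ s, x i}.Finite :=
  (Set.finite_range fun s : Finset (Fin n) ↦ ∑ i ∈ s, x i).subset <| by
    rintro _ ⟨s, -, rfl⟩
    exact ⟨s, rfl⟩

theorem sum_le_eSum (s : Finset (Fin n)) : ∑ i ∈ s, x i ≤ eSum x s.card :=
  le_csSup (finite_sums_of_card x _).bddAbove ⟨s, rfl, rfl⟩

theorem exists_eSum_eq_sum {l : ℕ} (hl : l ≤ n) :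
    ∃ s : Finset (Fin n), s.card = l ∧ eSum x l = ∑ i ∈ s, x i := by
  obtain ⟨s, -, hs⟩ := Finset.exists_subset_card_eq (hl.trans_eq (Finset.card_fin n).symm)
  refine Set.Nonempty.csSup_mem ?_ (finite_sums_of_card x l)
  exact ⟨_, s, hs, rfl⟩

@[simp]
theorem eSum_zero : eSum x 0 = 0 := by
  obtain ⟨s, hs, h⟩ := exists_eSum_eq_sum x n.zero_le
  rw [h, Finset.card_eq_zero.1 hs, Finset.sum_empty]

@[simp]
theorem eSum_self : eSum x n = ∑ i, x i := by
  obtain ⟨s, hs, h⟩ := exists_eSum_eq_sum x le_rfl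
  rw [h, (Finset.card_eq_iff_eq_univ s).1 (hs.trans (Fintype.card_fin n).symm)]

theorem eSum_le_mul_maxc {l : ℕ} (hl : l ≤ n) : eSum x l ≤ l * maxc x := by
  obtain ⟨s, rfl, h⟩ := exists_eSum_eq_sum x hl
  simpa only [h, nsmul_eq_mul] using s.sum_le_card_nsmul x _ fun i _ ↦ le_maxc x i

theorem eSum_add_mul_minc_le {k l : ℕ} (hkl : k + l = n) :
    eSum x k + l * minc x ≤ ∑ i, x i := by
  obtain ⟨s, rfl, h⟩ := exists_eSum_eq_sum x (Nat.le.intro hkl)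
  have hcard : sᶜ.card = l := by
    rw [Finset.card_compl, Fintype.card_fin]
    omega
  have hcompl : l * minc x ≤ ∑ i ∈ sᶜ, x i := by
    simpa only [hcard, nsmul_eq_mul] using sᶜ.card_nsmul_le_sum x _ fun i _ ↦ minc_le x i
  linarith [s.sum_add_sum_compl x]

theorem maxc_le_eSum_one (hn : 0 < n) : maxc x ≤ eSum x 1 := by
  obtain ⟨i, hi⟩ := exists_eq_maxc x hn
  simpa only [Finset.sum_singleton, Finset.card_singleton, hi] using sum_le_eSum x {i}

theorem sum_le_eSum_sub_one_add_minc (hn : 0 < n) : ∑ i, x i ≤ eSum x (n - 1) + minc x := by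
  obtain ⟨i, hi⟩ := exists_eq_minc x hn
  have herase := sum_le_eSum x (Finset.univ.erase i)
  rw [Finset.card_erase_of_mem (Finset.mem_univ i), Finset.card_fin] at herase
  linarith [Finset.univ.sum_erase_add x (Finset.mem_univ i)]

theorem eSum_comp_equiv {m : ℕ} (e : Fin m ≃ Fin n) (l : ℕ) : eSum (x ∘ e) l = eSum x l := by
  refine congrArg sSup (Set.ext fun r ↦ ?_)
  refine (Equiv.finsetCongr e).exists_congr fun s ↦ ?_
  simp [Finset.sum_map]

end LargestSums

section Concatenation

variable {m p : ℕ} (x : Fin m → ℝ) (x' : Fin p → ℝ)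

theorem sum_append_map_disjSum (a : Finset (Fin m)) (b : Finset (Fin p)) :
    ∑ i ∈ (a.disjSum b).map finSumFinEquiv.toEmbedding, Fin.append x x' i =
      ∑ i ∈ a, x i + ∑ i ∈ b, x' i := by
  simp [Finset.sum_map, Finset.sum_disjSum]

theorem eSum_append_comm (l : ℕ) : eSum (Fin.append x x') l = eSum (Fin.append x' x) l := by
  rw [← eSum_comp_equiv (Fin.append x' x) finAddFlip]
  congr 1
  ext i
  cases i using Fin.addCases <;> simp

theorem eSum_add_eSum_le_eSum_append {k l : ℕ} (hk : k ≤ m) (hl : l ≤ p) :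
    eSum x k + eSum x' l ≤ eSum (Fin.append x x') (k + l) := by
  obtain ⟨a, rfl, ha⟩ := exists_eSum_eq_sum x hk
  obtain ⟨b, rfl, hb⟩ := exists_eSum_eq_sum x' hl
  rw [ha, hb, ← sum_append_map_disjSum, ← Finset.card_disjSum,
    ← Finset.card_map finSumFinEquiv.toEmbedding]
  exact sum_le_eSum _ _

theorem exists_eSum_append_eq_add {t : ℕ} (ht : t ≤ m + p) :
    ∃ k ≤ m, ∃ l ≤ p, k + l = t ∧ eSum (Fin.append x x') t = eSum x k + eSum x' l := by
  obtain ⟨s, hs, hsum⟩ := exists_eSum_eq_sum (Fin.append x x') ht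
  obtain ⟨u, rfl⟩ := (Equiv.finsetCongr finSumFinEquiv).surjective s
  have hcard : u.toLeft.card + u.toRight.card = t := by
    rw [Finset.card_toLeft_add_card_toRight, ← hs, Equiv.finsetCongr_apply, Finset.card_map]
  have hm : u.toLeft.card ≤ m := card_finset_fin_le _
  have hp : u.toRight.card ≤ p := card_finset_fin_le _
  refine ⟨_, hm, _, hp, hcard, le_antisymm ?_ (hcard ▸ eSum_add_eSum_le_eSum_append x x' hm hp)⟩
  rw [hsum, ← u.toLeft_disjSum_toRight, Equiv.finsetCongr_apply, sum_append_map_disjSum,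
    Finset.toLeft_disjSum, Finset.toRight_disjSum]
  exact add_le_add (sum_le_eSum x _) (sum_le_eSum x' _)

theorem sum_lt_eSum_append_iff (hm : 0 < m) (hp : 0 < p) :
    ∑ i, x i < eSum (Fin.append x x') m ↔ minc x < maxc x' := by
  constructor
  · contrapose!
    intro hle
    obtain ⟨k, -, l, hl, hkl, h⟩ := exists_eSum_append_eq_add x x' (Nat.le_add_right m p)
    calc eSum (Fin.append x x') m
        = eSum x k + eSum x' l := h
      _ ≤ eSum x k + l * maxc x' := by gcongr; exact eSum_le_mul_maxc x' hl
      _ ≤ eSum x k + l * minc x := by gcongr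
      _ ≤ ∑ i, x i := eSum_add_mul_minc_le x hkl
  · intro hlt
    calc ∑ i, x i
        ≤ eSum x (m - 1) + minc x := sum_le_eSum_sub_one_add_minc x hm
      _ < eSum x (m - 1) + maxc x' := by gcongr
      _ ≤ eSum x (m - 1) + eSum x' 1 := by gcongr; exact maxc_le_eSum_one x' hp
      _ ≤ eSum (Fin.append x x') (m - 1 + 1) := eSum_add_eSum_le_eSum_append x x' (m.sub_le 1) hp
      _ = eSum (Fin.append x x') m := by rw [Nat.sub_add_cancel hm]

end Concatenation

section StrictMajorization

theorem SMaj.eSum_le {n : ℕ} {x y : Fin n → ℝ} (h : SMaj x y) {l : ℕ} (hl : l ≤ n) :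
    eSum x l ≤ eSum y l := by
  rcases l.eq_zero_or_pos with rfl | hpos
  · simp only [eSum_zero, le_refl]
  rcases hl.eq_or_lt with rfl | hlt
  · simp only [eSum_self, h.1, le_refl]
  · exact (h.2 l hpos hlt).le

variable {m p : ℕ} {x y : Fin m → ℝ} {x' y' : Fin p → ℝ}

theorem SMaj.append_of_sum_lt (h : SMaj x y) (h' : SMaj x' y')
    (hy : ∑ i, y i < eSum (Fin.append y y') m) (hy' : ∑ i, y' i < eSum (Fin.append y y') p) :
    SMaj (Fin.append x x') (Fin.append y y') := by
  refine ⟨by simp only [Fin.sum_univ_add, Fin.append_left, Fin.append_right, h.1, h'.1],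
    fun t ht ht' ↦ ?_⟩
  obtain ⟨k, hk, l, hl, rfl, heq⟩ := exists_eSum_append_eq_add x x' (Nat.le_of_succ_le ht')
  have hadd := eSum_add_eSum_le_eSum_append y y' hk hl
  have hcases : (1 ≤ k ∧ k + 1 ≤ m) ∨ (1 ≤ l ∧ l + 1 ≤ p) ∨ (k = m ∧ l = 0) ∨ (k = 0 ∧ l = p) := by
    omega
  rw [heq]
  rcases hcases with ⟨hk₀, hk₁⟩ | ⟨hl₀, hl₁⟩ | ⟨rfl, rfl⟩ | ⟨rfl, rfl⟩
  · exact (add_lt_add_of_lt_of_le (h.2 k hk₀ hk₁) (h'.eSum_le hl)).trans_le hadd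
  · exact (add_lt_add_of_le_of_lt (h.eSum_le hk) (h'.2 l hl₀ hl₁)).trans_le hadd
  · simpa only [eSum_self, eSum_zero, add_zero, h.1] using hy
  · simpa only [eSum_self, eSum_zero, zero_add, h'.1] using hy'

theorem SMaj.sum_lt_eSum_append (h : SMaj (Fin.append x x') (Fin.append y y'))
    (hm : 0 < m) (hp : 0 < p) : ∑ i, x i < eSum (Fin.append y y') m :=
  calc ∑ i, x i
      = eSum x m + eSum x' 0 := by rw [eSum_self, eSum_zero, add_zero]
    _ ≤ eSum (Fin.append x x') m := eSum_add_eSum_le_eSum_append x x' le_rfl p.zero_le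
    _ < eSum (Fin.append y y') m := h.2 m hm (Nat.add_le_add_left hp m)

theorem SMaj.append_comm (h : SMaj (Fin.append x x') (Fin.append y y')) :
    SMaj (Fin.append x' x) (Fin.append y' y) := by
  refine ⟨?_, fun l hl hl' ↦ ?_⟩
  · simpa only [Fin.sum_univ_add, Fin.append_left, Fin.append_right, add_comm] using h.1
  · rw [eSum_append_comm x', eSum_append_comm y']
    exact h.2 l hl (by omega)

theorem stmt9_general (hm : 0 < m) (hp : 0 < p) (h : SMaj x y) (h' : SMaj x' y') :
    SMaj (Fin.append x x') (Fin.append y y') ↔ minc y' < maxc y ∧ minc y < maxc y' := by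
  rw [← sum_lt_eSum_append_iff y' y hp hm, ← sum_lt_eSum_append_iff y y' hm hp]
  constructor
  · intro hxy
    rw [← h.1, ← h'.1]
    exact ⟨hxy.append_comm.sum_lt_eSum_append hp hm, hxy.sum_lt_eSum_append hm hp⟩
  · rintro ⟨hy', hy⟩
    exact h.append_of_sum_lt h' hy (eSum_append_comm y' y p ▸ hy')

end StrictMajorization

/-- Lemma 2 of the paper. If `x ◁ y` and `x' ◁ y'`, then
`x ⊕ x' ◁ y ⊕ y'` iff `max y > min y'` and `max y' > min y`. -/
theorem stmt9 {m p : ℕ} (hm : 0 < m) (hp : 0 < p)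
    (x y : Fin m → ℝ) (x' y' : Fin p → ℝ)
    (hx : ∀ i, 0 ≤ x i) (hy : ∀ i, 0 ≤ y i)
    (hx' : ∀ i, 0 ≤ x' i) (hy' : ∀ i, 0 ≤ y' i)
    (h1 : SMaj x y) (h2 : SMaj x' y') :
    SMaj (Fin.append x x') (Fin.append y y') ↔
      (minc y' < maxc y ∧ minc y < maxc y') :=
  stmt9_general hm hp h1 h2

end
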